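/- arXiv:1805.06728 — 2 statements merged into one kernel-verified Lean document; each statement's English description precedes it below -/
import Mathlib

section
/- There exist a constant d > 0 and n₀ such that the following holds for all natural numbers n ≥ n₀: for every natural number c with 3·log n < c < n/7, if X is a binomially distributed random variable with n − c trials and success probability 1 − (1 − 1/n)^{c/2}, then Prob[X ≤ c/3] ≤ n^{−d}. -/
open Real

theorem stmt_11 :
    ∃ d : ℝ, 0 < d ∧ ∃ n₀ : ℕ, ∀ n : ℕ, n₀ ≤ n →
      ∀ c : ℕ, 3 * Real.log n < (c : ℝ) → (c : ℝ) < (n : ℝ) / 7 →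
        ∀ p : ℝ, p = 1 - (1 - 1 / (n : ℝ)) ^ ((c : ℝ) / 2) →
          (∑ k ∈ Finset.range (n - c + 1),
              if (k : ℝ) ≤ (c : ℝ) / 3 then
                ((n - c).choose k : ℝ) * p ^ k * (1 - p) ^ (n - c - k)
              else 0)
            ≤ (n : ℝ) ^ (-d) := by
  refine ⟨1 / 200, by norm_num, 2, ?_⟩
  intro n hn c hc1 hc2 p hp
  have hn' : (2 : ℝ) ≤ n := by exact_mod_cast hn
  have hn0 : (0 : ℝ) < n := by linarith
  have hlog : 0 ≤ Real.log n := Real.log_nonneg (by linarith)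
  have hc0 : (0 : ℝ) < c := by linarith
  have hinv : 1 / (n : ℝ) ≤ 1 := by rw [div_le_one hn0]; linarith
  have hinv0 : 0 < 1 / (n : ℝ) := by positivity
  have hb0 : 0 ≤ 1 - 1 / (n : ℝ) := by linarith
  have hq0 : 0 ≤ 1 - p := by
    rw [hp]; have := Real.rpow_nonneg hb0 ((c : ℝ) / 2); linarith
  have hp0 : 0 ≤ p := by
    rw [hp]
    have := Real.rpow_le_one hb0 (by linarith) (by positivity : (0 : ℝ) ≤ (c : ℝ) / 2)
    linarith
  have hle : c ≤ n := by
    have : (c : ℝ) ≤ n := by linarith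
    exact_mod_cast this
  set x : ℝ := (c : ℝ) / (2 * n) with hx
  have hx0 : 0 < x := by positivity
  have hx1 : x ≤ 1 / 14 := by
    rw [hx, div_le_iff₀ (by positivity)]; linarith
  have hxn : x * n = c / 2 := by rw [hx]; field_simp
  have hpx : x * (14 / 15) ≤ p := by
    have h1 : (1 - 1 / (n : ℝ)) ^ ((c : ℝ) / 2) ≤ Real.exp (-x) := by
      calc (1 - 1 / (n : ℝ)) ^ ((c : ℝ) / 2) ≤ (Real.exp (-(1 / (n : ℝ)))) ^ ((c : ℝ) / 2) := by
            apply Real.rpow_le_rpow hb0 _ (by positivity)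
            have := Real.add_one_le_exp (-(1 / (n : ℝ)))
            linarith
        _ = Real.exp (-x) := by
            rw [← Real.exp_mul]; congr 1; rw [hx]; field_simp
    have h2 : Real.exp (-x) * (1 + x) ≤ 1 := by
      have h3 := Real.add_one_le_exp x
      have h4 : Real.exp (-x) * Real.exp x = 1 := by rw [← Real.exp_add]; simp
      nlinarith [Real.exp_pos (-x)]
    have h5 : Real.exp (-x) ≤ 1 - x * (14 / 15) := by
      by_contra h
      push Not at h
      nlinarith
    linarith
  set m := n - c with hm
  have hmr : (m : ℝ) = n - c := by rw [hm, Nat.cast_sub hle]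
  have hpm : (2 / 5 : ℝ) * c ≤ p * m := by
    have h1 : (6 / 7 : ℝ) * n ≤ m := by rw [hmr]; linarith
    calc (2 / 5 : ℝ) * c = (x * (14 / 15)) * ((6 / 7) * n) := by linarith
      _ ≤ p * m := by
        apply mul_le_mul hpx h1 (by positivity) hp0
  set s : ℝ := Real.exp (-(1 / 10)) with hs
  have hs0 : 0 < s := Real.exp_pos _
  have hs1 : s ≤ 10 / 11 := by
    have h3 := Real.add_one_le_exp (1 / 10 : ℝ)
    have h4 : s * Real.exp (1 / 10) = 1 := by rw [hs, ← Real.exp_add]; simp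
    nlinarith
  have key : (∑ k ∈ Finset.range (m + 1),
              if (k : ℝ) ≤ (c : ℝ) / 3 then
                (m.choose k : ℝ) * p ^ k * (1 - p) ^ (m - k)
              else 0) ≤ Real.exp (c / 30) * (p * s + (1 - p)) ^ m := by
    rw [add_pow, Finset.mul_sum]
    apply Finset.sum_le_sum
    intro k _
    have hA : 0 ≤ (m.choose k : ℝ) * p ^ k * (1 - p) ^ (m - k) := by positivity
    split_ifs with hk
    · have h1 : 1 ≤ Real.exp (c / 30) * s ^ k := by
        rw [hs, ← Real.exp_nat_mul, ← Real.exp_add]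
        apply Real.one_le_exp
        linarith
      calc _ ≤ ((m.choose k : ℝ) * p ^ k * (1 - p) ^ (m - k)) * (Real.exp (c / 30) * s ^ k) :=
            le_mul_of_one_le_right hA h1
        _ = _ := by rw [mul_pow]; ring
    · positivity
  refine key.trans ?_
  have h1 : (p * s + (1 - p)) ^ m ≤ Real.exp (-(p * (1 - s)) * m) := by
    rw [mul_comm _ (m : ℝ), Real.exp_nat_mul]
    apply pow_le_pow_left₀ (by positivity)
    have := Real.add_one_le_exp (-(p * (1 - s)))
    linarith
  calc Real.exp (c / 30) * (p * s + (1 - p)) ^ m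
      ≤ Real.exp (c / 30) * Real.exp (-(p * (1 - s)) * m) := by gcongr
    _ = Real.exp (c / 30 + -(p * (1 - s)) * m) := by rw [Real.exp_add]
    _ ≤ Real.exp (Real.log n * (-(1 / 200))) := by
        apply Real.exp_le_exp.mpr
        have : (2 / 5 : ℝ) * c * (1 / 11) ≤ p * m * (1 - s) := by
          apply mul_le_mul hpm (by linarith) (by norm_num) (by positivity)
        nlinarith
    _ = _ := by rw [Real.rpow_def_of_pos hn0]
end

section
/- For all sufficiently large natural numbers n the following holds: let c be a natural number with n/7 ≤ c < n − 3·log n, write ξ = c/n, let X be a binomially distributed random variable with n − c trials and success probability 1 − (1 − 1/n)^{c/2}, and set δ = √(3·log n/(n − c)). Then Prob[X ≤ (1 − δ)·E[X]] ≤ n^{−3·(1 − e^{−ξ/2})/2}. -/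
open Real Filter

lemma aux_log (s : ℝ) (hs : 0 < s) (hs1 : s ≤ 1) : (s ^ 2 - 1) / 2 ≤ s * Real.log s := by
  have h : -Real.log s ≤ Real.sinh (-Real.log s) :=
    Real.self_le_sinh_iff.2 (by linarith [Real.log_nonpos hs.le hs1])
  rw [Real.sinh_eq, neg_neg, Real.exp_neg, Real.exp_log hs] at h
  have h2 := mul_le_mul_of_nonneg_left h hs.le
  have h3 : s * ((s⁻¹ - s) / 2) = (1 - s ^ 2) / 2 := by field_simp
  rw [h3] at h2
  linarith

lemma aux_chernoff (m : ℕ) (p s : ℝ) (hp : 0 ≤ p) (hp1 : p ≤ 1) (hs : 0 < s) (hs1 : s ≤ 1) :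
    (∑ k ∈ Finset.range (m + 1),
      if (k : ℝ) ≤ s * ((m : ℝ) * p) then (m.choose k : ℝ) * p ^ k * (1 - p) ^ (m - k) else 0)
      ≤ Real.exp (-((1 - s) ^ 2 * m * p / 2)) := by
  have hl : Real.log s ≤ 0 := Real.log_nonpos hs.le hs1
  have hq : 0 ≤ 1 - p := by linarith
  have h1 : ∀ k ∈ Finset.range (m + 1),
      (if (k : ℝ) ≤ s * ((m : ℝ) * p) then (m.choose k : ℝ) * p ^ k * (1 - p) ^ (m - k) else 0)
      ≤ Real.exp (-(s * (m * p) * Real.log s)) *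
        ((p * s) ^ k * (1 - p) ^ (m - k) * (m.choose k : ℝ)) := by
    intro k _
    split_ifs with hk
    · have e : s ^ k = Real.exp (k * Real.log s) := by
        rw [Real.exp_nat_mul, Real.exp_log hs]
      have e2 : 1 ≤ Real.exp (-(s * (m * p) * Real.log s)) * s ^ k := by
        rw [e, ← Real.exp_add]
        apply Real.one_le_exp
        nlinarith
      have e3 : 0 ≤ (m.choose k : ℝ) * p ^ k * (1 - p) ^ (m - k) := by positivity
      calc _ ≤ (Real.exp (-(s * (m * p) * Real.log s)) * s ^ k) *
            ((m.choose k : ℝ) * p ^ k * (1 - p) ^ (m - k)) := le_mul_of_one_le_left e3 e2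
        _ = _ := by rw [mul_pow]; ring
    · positivity
  refine (Finset.sum_le_sum h1).trans ?_
  rw [← Finset.mul_sum, ← add_pow]
  have h2 : (p * s + (1 - p)) ^ m ≤ Real.exp (m * (-(p * (1 - s)))) := by
    rw [Real.exp_nat_mul]
    apply pow_le_pow_left₀ (by positivity)
    linarith [Real.add_one_le_exp (-(p * (1 - s)))]
  refine (mul_le_mul_of_nonneg_left h2 (Real.exp_nonneg _)).trans ?_
  rw [← Real.exp_add]
  apply Real.exp_le_exp.2
  have h3 := mul_le_mul_of_nonneg_left (aux_log s hs hs1) (mul_nonneg (Nat.cast_nonneg (α := ℝ) m) hp)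
  nlinarith

theorem stmt_12 :
    ∀ᶠ n : ℕ in atTop,
      ∀ c : ℕ, (n : ℝ) / 7 ≤ (c : ℝ) → (c : ℝ) < (n : ℝ) - 3 * Real.log n →
        ∀ ξ p δ : ℝ,
          ξ = (c : ℝ) / (n : ℝ) →
          p = 1 - (1 - 1 / (n : ℝ)) ^ ((c : ℝ) / 2) →
          δ = Real.sqrt (3 * Real.log n / ((n : ℝ) - (c : ℝ))) →
          (∑ k ∈ Finset.range (n - c + 1),
              if (k : ℝ) ≤ (1 - δ) * (((n : ℝ) - (c : ℝ)) * p) then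
                ((n - c).choose k : ℝ) * p ^ k * (1 - p) ^ (n - c - k)
              else 0)
            ≤ (n : ℝ) ^ (-(3 * (1 - Real.exp (-ξ / 2)) / 2)) := by
  filter_upwards [eventually_ge_atTop 2] with n hn c _ hc ξ p δ hξ hp hδ
  have hn' : (2 : ℝ) ≤ n := by exact_mod_cast hn
  have hn0 : (0 : ℝ) < n := by linarith
  have hlog : 0 < Real.log n := Real.log_pos (by linarith)
  have hcn : (c : ℝ) < n := by linarith
  have hcn' : c ≤ n := by exact_mod_cast hcn.le
  have hm : (0 : ℝ) < (n : ℝ) - c := by linarith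
  have hinv : 1 / (n : ℝ) ≤ 1 := by rw [div_le_one hn0]; linarith
  have hinv0 : 0 < 1 / (n : ℝ) := by positivity
  have hb : 0 ≤ 1 - 1 / (n : ℝ) := by linarith
  have hp1 : p ≤ 1 := by rw [hp]; linarith [Real.rpow_nonneg hb ((c : ℝ) / 2)]
  have hp0 : 0 ≤ p := by
    rw [hp]; linarith [Real.rpow_le_one hb (by linarith) (by positivity : 0 ≤ (c : ℝ) / 2)]
  have hpe : 1 - Real.exp (-ξ / 2) ≤ p := by
    have h1 : (1 - 1 / (n : ℝ)) ^ ((c : ℝ) / 2) ≤ (Real.exp (-(1 / (n : ℝ)))) ^ ((c : ℝ) / 2) :=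
      Real.rpow_le_rpow hb (by linarith [Real.add_one_le_exp (-(1 / (n : ℝ)))]) (by positivity)
    rw [← Real.exp_mul] at h1
    have h2 : -(1 / (n : ℝ)) * ((c : ℝ) / 2) = -ξ / 2 := by rw [hξ]; ring
    rw [h2] at h1
    rw [hp]; linarith
  have hd0 : 0 ≤ δ := by rw [hδ]; exact Real.sqrt_nonneg _
  have hd2 : δ ^ 2 = 3 * Real.log n / ((n : ℝ) - c) := by
    rw [hδ]; exact Real.sq_sqrt (by positivity)
  have hd2' : δ ^ 2 * ((n : ℝ) - c) = 3 * Real.log n := by rw [hd2]; field_simp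
  have hd1 : δ < 1 := by
    by_contra h
    push Not at h
    have h2 : 1 ≤ δ ^ 2 := one_le_pow₀ h
    have h3 := mul_le_mul_of_nonneg_right h2 hm.le
    linarith
  have key := aux_chernoff (n - c) p (1 - δ) hp0 hp1 (by linarith) (by linarith)
  rw [Nat.cast_sub hcn'] at key
  refine key.trans ?_
  rw [Real.rpow_def_of_pos hn0]
  apply Real.exp_le_exp.2
  have : (1 - (1 - δ)) ^ 2 * ((n : ℝ) - c) * p / 2 = 3 * Real.log n * p / 2 := by
    rw [← hd2']; ring
  rw [this]
  nlinarith
end
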